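/- Let (X,d) and (X*,d*) be hyperbolic metric spaces with bounded growth at some scale. Then there exists a constant L ≥ 1 such that for every Borel probability measure ν on ∂X × ∂X* and every Borel set F ⊆ ∂X × ∂X* with ν(F) > 0, the following holds: for ν-almost every ξ̄ ∈ F there exists r(ξ̄) > 0 such that for every r ∈ (0, r(ξ̄)), ν(F ∩ B̄(ξ̄, Lr)) ≥ (9/10) ν(B̄(ξ̄, r)). -/

import Mathlib

open MeasureTheory Filter Topology Metric Set
open scoped ENNReal Classical

noncomputable section

namespace HMDim

/-! ### Gromov products and hyperbolicity -/

/-- The Gromov product `(x|y)_o = (d(x,o)+d(o,y)-d(x,y))/2`. -/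
def gp {X : Type*} [MetricSpace X] (o x y : X) : ℝ :=
  (dist x o + dist o y - dist x y) / 2

/-- `X` is `δ`-hyperbolic. -/
def IsHyperbolicWith (X : Type*) [MetricSpace X] (δ : ℝ) : Prop :=
  ∀ x y z w : X, min (gp w x z) (gp w z y) - δ ≤ gp w x y

/-- `X` is hyperbolic: `δ`-hyperbolic for some `δ ≥ 0`. -/
def IsHyperbolic (X : Type*) [MetricSpace X] : Prop :=
  ∃ δ : ℝ, 0 ≤ δ ∧ IsHyperbolicWith X δ

/-- `X` is `C`-roughly geodesic for some `C ≥ 0`: any two points are joined by a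
`C`-rough geodesic. -/
def IsRoughGeodesicSpace (X : Type*) [MetricSpace X] : Prop :=
  ∃ C : ℝ, 0 ≤ C ∧ ∀ x y : X, ∃ (b : ℝ) (γ : ℝ → X), 0 ≤ b ∧ γ 0 = x ∧ γ b = y ∧
    ∀ s ∈ Set.Icc (0:ℝ) b, ∀ t ∈ Set.Icc (0:ℝ) b, abs (dist (γ s) (γ t) - |s - t|) ≤ C

/-- Bounded growth at some scale: there are `0 < r < R` and `N` such that every ball of
radius `R` is covered by at most `N` balls of radius `r`. -/
def HasBoundedGrowthAtSomeScale (X : Type*) [MetricSpace X] : Prop :=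
  ∃ (r R : ℝ) (N : ℕ), 0 < r ∧ r < R ∧
    ∀ x : X, ∃ s : Finset X, s.card ≤ N ∧ Metric.ball x R ⊆ ⋃ y ∈ s, Metric.ball y r

/-! ### The Gromov boundary -/

/-- A sequence is divergent if it is Cauchy for the Gromov-product quasi-metric, i.e.
`(u n | u m)_o → ∞`. -/
def IsDivergent {X : Type*} [MetricSpace X] (o : X) (u : ℕ → X) : Prop :=
  Tendsto (fun pr : ℕ × ℕ => gp o (u pr.1) (u pr.2)) atTop atTop

/-- The type of divergent sequences. -/
def DivSeq (X : Type*) [MetricSpace X] (o : X) : Type _ := {u : ℕ → X // IsDivergent o u}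

/-- Two divergent sequences are equivalent when `(u n | v m)_o → ∞`. -/
def bndRel {X : Type*} [MetricSpace X] (o : X) (u v : DivSeq X o) : Prop :=
  Tendsto (fun pr : ℕ × ℕ => gp o (u.1 pr.1) (v.1 pr.2)) atTop atTop

/-- The Gromov boundary: equivalence classes of divergent sequences. -/
def Boundary (X : Type*) [MetricSpace X] (o : X) : Type _ := Quot (bndRel o)

/-- The boundary point of a divergent sequence. -/
def mkB {X : Type*} [MetricSpace X] (o : X) (u : DivSeq X o) : Boundary X o :=
  Quot.mk _ u

/-- The extended Gromov product of two boundary points: the infimum over pairs of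
representatives of the liminf of Gromov products. -/
def gpB {X : Type*} [MetricSpace X] (o : X) (ξ η : Boundary X o) : ℝ :=
  sInf {t : ℝ | ∃ u v : DivSeq X o, mkB o u = ξ ∧ mkB o v = η ∧
    t = Filter.liminf (fun pr : ℕ × ℕ => gp o (u.1 pr.1) (v.1 pr.2)) atTop}

/-- The quasi-metric `q(ξ,η) = exp(-(ξ|η)_o)` on the boundary (`0` on the diagonal). -/
def qB {X : Type*} [MetricSpace X] (o : X) (ξ η : Boundary X o) : ℝ :=
  if ξ = η then 0 else Real.exp (-(gpB o ξ η))

/-- The extended Gromov product of an interior point with a boundary point. -/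
def gpXB {X : Type*} [MetricSpace X] (o : X) (x : X) (ξ : Boundary X o) : ℝ :=
  sInf {t : ℝ | ∃ u : DivSeq X o, mkB o u = ξ ∧
    t = Filter.liminf (fun m : ℕ => gp o x (u.1 m)) atTop}

/-- Quasi-metric between an interior point and a boundary point. -/
def qXB {X : Type*} [MetricSpace X] (o : X) (x : X) (ξ : Boundary X o) : ℝ :=
  Real.exp (-(gpXB o x ξ))

/-- The open ball of a quasi-metric. -/
def qball {A : Type*} (q : A → A → ℝ) (ξ : A) (r : ℝ) : Set A := {η | q ξ η < r}

/-- The max quasi-metric `q̄` on the product of two boundaries. -/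
def qbb {X Xs : Type*} [MetricSpace X] [MetricSpace Xs] (o : X) (os : Xs)
    (ξ η : Boundary X o × Boundary Xs os) : ℝ :=
  max (qB o ξ.1 η.1) (qB os ξ.2 η.2)

/-- Boundaries are measurable spaces, with the σ-algebra generated by quasi-metric balls. -/
instance (X : Type*) [MetricSpace X] (o : X) : MeasurableSpace (Boundary X o) :=
  MeasurableSpace.generateFrom {s | ∃ ξ r, s = qball (qB o) ξ r}

/-! ### The boundary action of isometries -/

lemma gp_isometry_le {X : Type*} [MetricSpace X] (o : X) (g : X ≃ᵢ X) (x y : X) :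
    gp o x y - dist o (g o) ≤ gp o (g x) (g y) := by
  have e1 : dist (g x) (g o) = dist x o := g.dist_eq x o
  have e2 : dist (g o) (g y) = dist o y := g.dist_eq o y
  have e3 : dist (g x) (g y) = dist x y := g.dist_eq x y
  have e4 : dist (g o) o = dist o (g o) := dist_comm _ _
  have t1 : dist (g x) (g o) ≤ dist (g x) o + dist o (g o) := dist_triangle _ _ _
  have t2 : dist (g o) (g y) ≤ dist (g o) o + dist o (g y) := dist_triangle _ _ _
  simp only [gp]
  linarith [t1, t2, e1, e2, e3, e4]

lemma isDivergent_comp {X : Type*} [MetricSpace X] (o : X) (g : X ≃ᵢ X) {u : ℕ → X}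
    (h : IsDivergent o u) : IsDivergent o fun n => g (u n) := by
  have h' := tendsto_atTop_add_const_right atTop (-(dist o (g o)))
    (h : Tendsto (fun pr : ℕ × ℕ => gp o (u pr.1) (u pr.2)) atTop atTop)
  refine tendsto_atTop_mono (fun pr => ?_) h'
  have := gp_isometry_le o g (u pr.1) (u pr.2)
  simpa [sub_eq_add_neg] using this

lemma bndRel_comp {X : Type*} [MetricSpace X] (o : X) (g : X ≃ᵢ X) {u v : DivSeq X o}
    (h : bndRel o u v) :
    bndRel o ⟨fun n => g (u.1 n), isDivergent_comp o g u.2⟩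
      ⟨fun n => g (v.1 n), isDivergent_comp o g v.2⟩ := by
  have h' := tendsto_atTop_add_const_right atTop (-(dist o (g o)))
    (h : Tendsto (fun pr : ℕ × ℕ => gp o (u.1 pr.1) (v.1 pr.2)) atTop atTop)
  refine tendsto_atTop_mono (fun pr => ?_) h'
  have := gp_isometry_le o g (u.1 pr.1) (v.1 pr.2)
  simpa [sub_eq_add_neg] using this

/-- The induced action of an isometry on the Gromov boundary. -/
def bAct {X : Type*} [MetricSpace X] (o : X) (g : X ≃ᵢ X) :
    Boundary X o → Boundary X o :=
  Quot.map (fun u : DivSeq X o =>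
      (⟨fun n => g (u.1 n), isDivergent_comp o g u.2⟩ : DivSeq X o))
    (fun _ _ h => bndRel_comp o g h)

/-! ### Random walks on countable groups -/

/-- Convolution of two measures (as `ℝ≥0∞`-valued functions) on a group. -/
def conv {G : Type*} [Group G] (p q : G → ℝ≥0∞) : G → ℝ≥0∞ :=
  fun x => ∑' y : G, p y * q (y⁻¹ * x)

/-- The `n`-fold convolution power `π_n` of `p`. -/
def piN {G : Type*} [Group G] (p : G → ℝ≥0∞) : ℕ → G → ℝ≥0∞
  | 0 => fun x => if x = 1 then 1 else 0
  | n + 1 => conv (piN p n) p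

/-- The Shannon entropy `H(π_n)` of the `n`-th convolution power. -/
def entropySeq {G : Type*} [Group G] (p : G → ℝ≥0∞) (n : ℕ) : ℝ :=
  ∑' x : G, Real.negMulLog ((piN p n x).toReal)

/-- The first moment of `π_n` with respect to a displacement function `f`. -/
def momentSeq {G : Type*} [Group G] (p : G → ℝ≥0∞) (f : G → ℝ) (n : ℕ) : ℝ :=
  ∑' x : G, (piN p n x).toReal * f x

/-- `h` is the asymptotic entropy of the `p`-random walk:
`h = lim (1/n) H(π_n)`. -/
def HasEntropy {G : Type*} [Group G] (p : G → ℝ≥0∞) (h : ℝ) : Prop :=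
  Tendsto (fun n : ℕ => entropySeq p n / n) atTop (nhds h)

/-- `l` is the drift (rate of escape) of the `p`-random walk with respect to the
displacement `f`: `l = lim (1/n) Σ_x f(x) π_n(x)`. -/
def HasDrift {G : Type*} [Group G] (p : G → ℝ≥0∞) (f : G → ℝ) (l : ℝ) : Prop :=
  Tendsto (fun n : ℕ => momentSeq p f n / n) atTop (nhds l)

/-- `p` is a probability distribution. -/
def IsProb {G : Type*} (p : G → ℝ≥0∞) : Prop := ∑' x : G, p x = 1

/-- Finite first moment with respect to a displacement function `f`. -/
def FiniteFirstMoment {G : Type*} (p : G → ℝ≥0∞) (f : G → ℝ) : Prop :=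
  ∑' x : G, p x * ENNReal.ofReal (f x) ≠ ∞

/-- The pushforward of a distribution `p` by a map `f` (e.g. a marginal). -/
def marginalStar {G A : Type*} (p : G → ℝ≥0∞) (f : G → A) : A → ℝ≥0∞ :=
  fun a => ∑' x : G, if f x = a then p x else 0

/-- A subgroup is non-elementary (in the relevant sense) if it contains a free
subgroup of rank 2. -/
def IsNonElementarySubgroup {G : Type*} [Group G] (H : Subgroup G) : Prop :=
  ∃ φ : FreeGroup (Fin 2) →* G, Function.Injective φ ∧ φ.range ≤ H

/-- A measure `p` on a group is non-elementary if the subgroup generated by its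
support contains a free subgroup of rank 2. -/
def IsNonElemMeasure {G : Type*} [Group G] (p : G → ℝ≥0∞) : Prop :=
  IsNonElementarySubgroup (Subgroup.closure {x : G | p x ≠ 0})

/-- A group containing a free subgroup of rank 2 (a non-elementary group). -/
def HasFreeSubgroup (G : Type*) [Group G] : Prop :=
  ∃ φ : FreeGroup (Fin 2) →* G, Function.Injective φ

/-! ### Path space -/

/-- The position `w_n = x_1 ⋯ x_n` of the random walk with increments `ω`. -/
def walk {G : Type*} [Group G] (ω : ℕ → G) (n : ℕ) : G := ((List.range n).map ω).prod

/-- The cylinder set `[w̄_0, …, w̄_n]` of trajectories whose positions agree with those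
of `ω` up to time `n`. -/
def cyl {G : Type*} [Group G] (ω : ℕ → G) (n : ℕ) : Set (ℕ → G) :=
  {ω' | ∀ i ≤ n, walk ω' i = walk ω i}

/-- `P` is the distribution of the increments of the `p`-random walk: the product
measure `p^{⊗ℕ}` on the path space. -/
def IsRWMeasure {G : Type*} [Group G] [MeasurableSpace G] (p : G → ℝ≥0∞)
    (P : Measure (ℕ → G)) : Prop :=
  IsProbabilityMeasure P ∧
    ∀ (n : ℕ) (g : ℕ → G), P {ω | ∀ i < n, ω i = g i} = ∏ i ∈ Finset.range n, p (g i)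

/-- `ν` is the harmonic measure on the boundary of `X` for the random walk with path
measure `P` and orbit map `z`: the image of `P` under the a.s.-defined boundary map. -/
def IsHarmonic {Ω X : Type*} [MeasurableSpace Ω] [MetricSpace X] (o : X)
    (P : Measure Ω) (z : Ω → ℕ → X) (ν : Measure (Boundary X o)) : Prop :=
  ∃ bnd : Ω → Boundary X o, Measurable bnd ∧ ν = P.map bnd ∧
    ∀ᵐ ω ∂P, ∃ h : IsDivergent o (z ω), bnd ω = mkB o ⟨z ω, h⟩

/-- `ν` is the harmonic measure on the product of the boundaries of `X` and `Xs` for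
the random walk with path measure `P` and orbit maps `z`, `zs`. -/
def IsJointHarmonic {Ω X Xs : Type*} [MeasurableSpace Ω] [MetricSpace X] [MetricSpace Xs]
    (o : X) (os : Xs) (P : Measure Ω) (z : Ω → ℕ → X) (zs : Ω → ℕ → Xs)
    (ν : Measure (Boundary X o × Boundary Xs os)) : Prop :=
  ∃ bnd : Ω → Boundary X o × Boundary Xs os, Measurable bnd ∧ ν = P.map bnd ∧
    ∀ᵐ ω ∂P, ∃ (h1 : IsDivergent o (z ω)) (h2 : IsDivergent os (zs ω)),
      bnd ω = (mkB o ⟨z ω, h1⟩, mkB os ⟨zs ω, h2⟩)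

/-- `cond` is a disintegration (system of conditional measures) of `P` with respect to
the map `f`, over the pushforward `νB = f_* P`. -/
def IsDisintegration {A B : Type*} [MeasurableSpace A] [MeasurableSpace B]
    (P : Measure A) (f : A → B) (νB : Measure B) (cond : B → Measure A) : Prop :=
  νB = P.map f ∧ (∀ᵐ b ∂νB, IsProbabilityMeasure (cond b)) ∧
    (∀ᵐ b ∂νB, cond b (f ⁻¹' {b}) = 1) ∧
    ∀ s : Set A, MeasurableSet s → P s = ∫⁻ b, cond b s ∂νB

/-! ### Hausdorff dimension for quasi-metrics -/

/-- Diameter of a set for a quasi-metric. -/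
def qdiam {A : Type*} (q : A → A → ℝ) (E : Set A) : ℝ≥0∞ :=
  ⨆ x ∈ E, ⨆ y ∈ E, ENNReal.ofReal (q x y)

/-- Hausdorff pre-measure (content) at scale `Δ`. -/
def qHContent {A : Type*} (q : A → A → ℝ) (α Δ : ℝ) (E : Set A) : ℝ≥0∞ :=
  ⨅ (c : ℕ → Set A) (_ : E ⊆ ⋃ i, c i) (_ : ∀ i, qdiam q (c i) ≤ ENNReal.ofReal Δ),
    ∑' i, qdiam q (c i) ^ α

/-- The `α`-dimensional Hausdorff measure of a set for a quasi-metric. -/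
def qHMeasure {A : Type*} (q : A → A → ℝ) (α : ℝ) (E : Set A) : ℝ≥0∞ :=
  ⨆ (Δ : ℝ) (_ : 0 < Δ), qHContent q α Δ E

/-- The Hausdorff dimension of a set for a quasi-metric. -/
def qdimSet {A : Type*} (q : A → A → ℝ) (E : Set A) : ℝ :=
  sSup {α : ℝ | 0 ≤ α ∧ 0 < qHMeasure q α E}

/-- The upper Hausdorff dimension of a measure. -/
def qdimUpper {A : Type*} [MeasurableSpace A] (q : A → A → ℝ) (ν : Measure A) : ℝ :=
  sInf {d : ℝ | ∃ E : Set A, MeasurableSet E ∧ ν Eᶜ = 0 ∧ d = qdimSet q E}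

/-- The lower Hausdorff dimension of a measure. -/
def qdimLower {A : Type*} [MeasurableSpace A] (q : A → A → ℝ) (ν : Measure A) : ℝ :=
  sInf {d : ℝ | ∃ E : Set A, MeasurableSet E ∧ 0 < ν E ∧ d = qdimSet q E}

/-- The Hausdorff dimension of `ν` exists and equals `D`. -/
def HasDim {A : Type*} [MeasurableSpace A] (q : A → A → ℝ) (ν : Measure A) (D : ℝ) : Prop :=
  qdimUpper q ν = D ∧ qdimLower q ν = D

/-- `ν` is exact dimensional with dimension `D` for the quasi-metric `q`:
`lim_{r→0} log ν(B(ξ,r))/log r = D` for `ν`-a.e. `ξ`. -/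
def ExactDim {A : Type*} [MeasurableSpace A] (q : A → A → ℝ) (ν : Measure A) (D : ℝ) : Prop :=
  ∀ᵐ ξ ∂ν, Tendsto (fun r : ℝ => Real.log (ν (qball q ξ r)).toReal / Real.log r)
    (nhdsWithin 0 (Set.Ioi 0)) (nhds D)

/-! ### Differential entropy -/

/-- The differential entropy
`h(∂X*, μ*) = Σ_g μ*(g) ∫ log (d gν/dν) d(gν)` of a measure on the isometry group with
respect to a boundary measure. -/
def diffEntropy {Xs : Type*} [MetricSpace Xs] (os : Xs) (pstar : (Xs ≃ᵢ Xs) → ℝ≥0∞)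
    (νs : Measure (Boundary Xs os)) : ℝ :=
  ∑' g : (Xs ≃ᵢ Xs), (pstar g).toReal *
    ∫ η, Real.log ((Measure.rnDeriv (νs.map (bAct os g)) νs η).toReal)
      ∂(νs.map (bAct os g))

/-! ### Word metrics and hyperbolic groups -/

/-- The word length of `g` with respect to a (symmetrized) generating set `S`. -/
def wordLength {G : Type*} [Group G] (S : Set G) (g : G) : ℕ :=
  sInf {n : ℕ | ∃ f : Fin n → G, (∀ i, f i ∈ S ∨ (f i)⁻¹ ∈ S) ∧ g = (List.ofFn f).prod}

/-- The metric of `G` is quasi-isometric to a word metric of a finite generating set. -/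
def IsQIToWordMetric (G : Type*) [Group G] [MetricSpace G] : Prop :=
  ∃ S : Finset G, Subgroup.closure (S : Set G) = ⊤ ∧
    ∃ Λ c : ℝ, 1 ≤ Λ ∧ 0 ≤ c ∧ ∀ g : G,
      (wordLength (S : Set G) g : ℝ) / Λ - c ≤ dist (1 : G) g ∧
      dist (1 : G) g ≤ Λ * (wordLength (S : Set G) g) + c

/-- The metric of `G` is left invariant. -/
def LeftInvariantMetric (G : Type*) [Group G] [MetricSpace G] : Prop :=
  ∀ g x y : G, dist (g * x) (g * y) = dist x y

/-- `G`, with its metric, is a hyperbolic group: the metric is left invariant,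
hyperbolic and quasi-isometric to a word metric. -/
def IsHypGroupMetric (G : Type*) [Group G] [MetricSpace G] : Prop :=
  LeftInvariantMetric G ∧ IsHyperbolic G ∧ IsQIToWordMetric G

/-! ### Groups of isometries of a product -/

/-- First component of an element of a subgroup of `Isom X × Isom X*`. -/
def proj1 {X Xs : Type*} [MetricSpace X] [MetricSpace Xs]
    {Γb : Subgroup ((X ≃ᵢ X) × (Xs ≃ᵢ Xs))} (γ : Γb) : X ≃ᵢ X :=
  (γ : (X ≃ᵢ X) × (Xs ≃ᵢ Xs)).1

/-- Second component of an element of a subgroup of `Isom X × Isom X*`. -/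
def proj2 {X Xs : Type*} [MetricSpace X] [MetricSpace Xs]
    {Γb : Subgroup ((X ≃ᵢ X) × (Xs ≃ᵢ Xs))} (γ : Γb) : Xs ≃ᵢ Xs :=
  (γ : (X ≃ᵢ X) × (Xs ≃ᵢ Xs)).2

/-- Displacement `d̄(ō, γ·ō)` of the base point `ō = (o,o*)` (the metric of the product
is the max metric). -/
def disp {X Xs : Type*} [MetricSpace X] [MetricSpace Xs]
    {Γb : Subgroup ((X ≃ᵢ X) × (Xs ≃ᵢ Xs))} (o : X) (os : Xs) (γ : Γb) : ℝ :=
  dist (o, os) (proj1 γ o, proj2 γ os)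

/-- Finite exponential growth relative to a displacement function `f`:
`#{x : f(x) < r} ≤ c e^{c r}`. -/
def FinExpGrowth {G : Type*} (f : G → ℝ) : Prop :=
  ∃ c : ℝ, 0 < c ∧ ∀ r : ℝ, 0 < r →
    {x : G | f x < r}.Finite ∧ ({x : G | f x < r}.ncard : ℝ) ≤ c * Real.exp (c * r)

/-! ### The events of Lemmas `A` and `E_n(η)` -/

/-- The event `A_{ε,n} = ∩_{t ≥ n} {z̄_∞ exists and q̄(z̄_t, z̄_∞) ≤ e^{-(l*-ε)n}}`. -/
def Aev {X Xs : Type*} [MetricSpace X] [MetricSpace Xs]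
    (Γb : Subgroup ((X ≃ᵢ X) × (Xs ≃ᵢ Xs))) (o : X) (os : Xs) (ε lst : ℝ) (n : ℕ) :
    Set (ℕ → Γb) :=
  {ω | ∃ (h1 : IsDivergent o (fun t => proj1 (walk ω t) o))
        (h2 : IsDivergent os (fun t => proj2 (walk ω t) os)),
      ∀ t, n ≤ t →
        max (qXB o (proj1 (walk ω t) o) (mkB o ⟨_, h1⟩))
            (qXB os (proj2 (walk ω t) os) (mkB os ⟨_, h2⟩))
          ≤ Real.exp (-((lst - ε) * n))}

/-- The event
`E_{ε,n}(η) = {P^η([w̄_0,…,w̄_n] ∩ A_{ε,n}) ≤ e^{n(h*+ε)} P([w̄_0,…,w̄_n] ∩ A_{ε,n})}`. -/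
def Eev {X Xs : Type*} [MetricSpace X] [MetricSpace Xs]
    (Γb : Subgroup ((X ≃ᵢ X) × (Xs ≃ᵢ Xs))) [MeasurableSpace Γb] (o : X) (os : Xs)
    (P : Measure (ℕ → Γb)) (condP : Boundary Xs os → Measure (ℕ → Γb))
    (hst ε lst : ℝ) (η : Boundary Xs os) (n : ℕ) : Set (ℕ → Γb) :=
  {ω | condP η (cyl ω n ∩ Aev Γb o os ε lst n) ≤
        ENNReal.ofReal (Real.exp (n * (hst + ε))) * P (cyl ω n ∩ Aev Γb o os ε lst n)}

/-! ### Special measures -/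

/-- The measure `π^ρ = ρ μ×μ + (1-ρ) μ_diag` on `Γ × Γ`. -/
def pRho {Γ : Type*} (p : Γ → ℝ≥0∞) (ρ : ℝ) : Γ × Γ → ℝ≥0∞ :=
  fun g => ENNReal.ofReal ρ * (p g.1 * p g.2) +
    ENNReal.ofReal (1 - ρ) * (if g.1 = g.2 then p g.1 else 0)

/-- The uniform distribution on the symmetrized free basis of `F_{m+1}`. -/
def symFreeBasisUniform (m : ℕ) : FreeGroup (Fin (m + 1)) → ℝ≥0∞ :=
  fun g => if ∃ i : Fin (m + 1), g = FreeGroup.of i ∨ g = (FreeGroup.of i)⁻¹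
    then ENNReal.ofReal (1 / (2 * (m + 1))) else 0

/-- The homomorphism `F_{m+1} → F_m` sending `x_i ↦ y_i` for `i ≤ m` and `x_{m+1} ↦ 1`. -/
def projHom (m : ℕ) : FreeGroup (Fin (m + 1)) →* FreeGroup (Fin m) :=
  FreeGroup.lift (fun i => if h : (i : ℕ) < m then FreeGroup.of (⟨i, h⟩ : Fin m) else 1)

/-!
The density of a measurable set is bounded below as in Lebesgue's theorem, by a Vitali covering
and outer regularity. Vitali's disjoint balls cover a set only after enlargement by a factor `2K`,
where `K` is the constant of the quasi-metric; this is why the conclusion compares the balls of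
radii `r` and `L r`.

Two features of the setting need care. The boundary need not be separable, so Vitali's theorem
yields countable families only for balls of positive measure, and outer regularity is available
only relative to the support of the measure. The σ-algebra is generated by balls, so for the
regularity argument balls have to be open, which is not automatic for a quasi-metric; for the
quasi-metric `exp (-(ξ|η))` it follows by a diagonal argument because `(ξ|η)` is an infimum over
representing sequences.
-/

/-- A `K`-quasi-metric: symmetric, zero on the diagonal, and satisfying the ultrametric inequality
up to the factor `K`. Distinct points may be at distance zero. -/
structure IsQuasiMetric {A : Type*} (q : A → A → ℝ) (K : ℝ) : Prop where
  one_le : 1 ≤ K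
  self_eq_zero : ∀ x, q x x = 0
  symm : ∀ x y, q x y = q y x
  le_mul_max : ∀ x y z, q x z ≤ K * max (q x y) (q y z)

/-- A quasi-metric compatible with a topology and a σ-algebra: the balls are open and measurable,
they form neighbourhood bases, and the σ-algebra is generated by open sets. The σ-algebra may be
smaller than the Borel σ-algebra, as arbitrary unions of balls need not be measurable. -/
structure IsBorelQuasiMetric {A : Type*} [TopologicalSpace A] [mA : MeasurableSpace A]
    (q : A → A → ℝ) (K : ℝ) : Prop extends IsQuasiMetric q K where
  nhds_hasBasis : ∀ x, (𝓝 x).HasBasis (0 < ·) (qball q x)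
  isOpen_qball : ∀ x r, IsOpen (qball q x r)
  measurableSet_qball : ∀ x r, MeasurableSet (qball q x r)
  exists_eq_generateFrom :
    ∃ G : Set (Set A), mA = MeasurableSpace.generateFrom G ∧ ∀ s ∈ G, IsOpen s

lemma qball_mono {A : Type*} (q : A → A → ℝ) (x : A) : Monotone (qball q x) :=
  fun _ _ hrs _ hy => lt_of_lt_of_le hy hrs

namespace IsQuasiMetric

variable {A : Type*} {q : A → A → ℝ} {K : ℝ}

lemma nonneg (hq : IsQuasiMetric q K) (x y : A) : 0 ≤ q x y := by
  have h : 0 ≤ K * q x y := by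
    simpa only [hq.self_eq_zero, hq.symm y x, max_self] using hq.le_mul_max x y x
  exact nonneg_of_mul_nonneg_right h (zero_lt_one.trans_le hq.one_le)

lemma mem_qball_self (hq : IsQuasiMetric q K) (x : A) {r : ℝ} (hr : 0 < r) : x ∈ qball q x r :=
  (hq.self_eq_zero x).trans_lt hr

lemma qball_subset_qball_mul (hq : IsQuasiMetric q K) (x : A) {r : ℝ} (hr : 0 ≤ r) :
    qball q x r ⊆ qball q x (2 * K * r) :=
  qball_mono q x <| le_mul_of_one_le_left hr (by linarith [hq.one_le])

lemma exists_pairwiseDisjoint_cover (hq : IsQuasiMetric q K) {E : Set A} {ρ : A → ℝ} {R : ℝ}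
    (hρ : ∀ x ∈ E, ρ x ∈ Ioc 0 R) :
    ∃ u ⊆ E, u.PairwiseDisjoint (fun x => qball q x (ρ x)) ∧
      E ⊆ ⋃ b ∈ u, qball q b (2 * K * ρ b) := by
  obtain ⟨u, huE, hdisj, hcov⟩ := Vitali.exists_disjoint_subfamily_covering_enlargement
    (fun x => qball q x (ρ x)) E ρ 2 one_lt_two (fun x hx => (hρ x hx).1.le) R
    (fun x hx => (hρ x hx).2) (fun x hx => ⟨x, hq.mem_qball_self x (hρ x hx).1⟩)
  refine ⟨u, huE, hdisj, fun x hx => ?_⟩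
  obtain ⟨b, hb, ⟨z, hxz, hbz⟩, hle⟩ := hcov x hx
  have hmax : max (q b z) (q z x) < 2 * ρ b :=
    max_lt (lt_trans hbz (by linarith [(hρ b (huE hb)).1]))
      (hq.symm z x ▸ lt_of_lt_of_le hxz hle)
  refine mem_biUnion hb ?_
  calc q b x ≤ K * max (q b z) (q z x) := hq.le_mul_max b z x
    _ < K * (2 * ρ b) := mul_lt_mul_of_pos_left hmax (zero_lt_one.trans_le hq.one_le)
    _ = 2 * K * ρ b := by ring

end IsQuasiMetric

lemma countable_of_pairwiseDisjoint_of_measure_pos {ι A : Type*} [MeasurableSpace A]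
    {ν : Measure A} [SFinite ν] {u : Set ι} {B : ι → Set A} (hdisj : u.PairwiseDisjoint B)
    (hmeas : ∀ i ∈ u, MeasurableSet (B i)) (hpos : ∀ i ∈ u, 0 < ν (B i)) : u.Countable := by
  have h := Measure.countable_meas_pos_of_disjoint_iUnion (μ := ν) (As := fun i : u => B i)
    (fun i => hmeas i i.2) (hdisj.subtype _ _)
  rwa [show {i : u | 0 < ν (B i)} = univ from eq_univ_of_forall fun i => hpos i i.2,
    countable_univ_iff] at h

/-- Outer regularity of `ν` on `F` relative to `S`: the part of `F` in `S` has open neighbourhoods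
which exceed `F` by arbitrarily little. The complement of `S` may have positive measure. -/
def IsOuterRegularWithin {A : Type*} [TopologicalSpace A] [MeasurableSpace A] (ν : Measure A)
    (S F : Set A) : Prop :=
  ∀ ε : ℝ≥0∞, 0 < ε → ∃ U, IsOpen U ∧ F ∩ S ⊆ U ∧ ν (U \ F) < ε

namespace IsOuterRegularWithin

variable {A : Type*} [TopologicalSpace A] [MeasurableSpace A] {ν : Measure A} {S : Set A}

lemma of_isOpen {F : Set A} (hF : IsOpen F) : IsOuterRegularWithin ν S F :=
  fun ε hε => ⟨F, hF, inter_subset_left, by rwa [sdiff_self, measure_empty]⟩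

lemma of_subset {C F : Set A} (hC : IsOuterRegularWithin ν S C) (hFC : F ∩ S ⊆ C) (hCF : C ⊆ F) :
    IsOuterRegularWithin ν S F := fun ε hε =>
  let ⟨U, hU, hCU, hUC⟩ := hC ε hε
  ⟨U, hU, fun _ hx => hCU ⟨hFC hx, hx.2⟩,
    (measure_mono (sdiff_subset_sdiff_right hCF)).trans_lt hUC⟩

lemma iUnion {F : ℕ → Set A} (hF : ∀ n, IsOuterRegularWithin ν S (F n)) :
    IsOuterRegularWithin ν S (⋃ n, F n) := by
  intro ε hε
  obtain ⟨e, he, hsum⟩ := ENNReal.exists_pos_sum_of_countable hε.ne' ℕ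
  choose U hUo hFU hUF using fun n => hF n (e n) (by exact_mod_cast he n)
  refine ⟨⋃ n, U n, isOpen_iUnion hUo, by rw [iUnion_inter]; exact iUnion_mono hFU, ?_⟩
  calc ν ((⋃ n, U n) \ ⋃ n, F n) ≤ ν (⋃ n, U n \ F n) := by
        rw [iUnion_sdiff]
        exact measure_mono (iUnion_mono fun n => sdiff_subset_sdiff_right (subset_iUnion F n))
    _ ≤ ∑' n, ν (U n \ F n) := measure_iUnion_le _
    _ ≤ ∑' n, (e n : ℝ≥0∞) := ENNReal.tsum_le_tsum fun n => (hUF n).le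
    _ < ε := hsum

lemma iInter [IsFiniteMeasure ν] {F : ℕ → Set A} (hF : ∀ n, IsOuterRegularWithin ν S (F n))
    (hmeas : ∀ n, MeasurableSet (F n)) : IsOuterRegularWithin ν S (⋂ n, F n) := by
  intro ε hε
  have hε2 : 0 < ε / 2 := ENNReal.half_pos hε.ne'
  obtain ⟨e, he, hsum⟩ := ENNReal.exists_pos_sum_of_countable hε2.ne' ℕ
  choose U hUo hFU hUF using fun n => hF n (e n) (by exact_mod_cast he n)
  obtain ⟨m, hm⟩ := exists_measure_iInter_lt (μ := ν) (f := fun n => F n \ ⋂ k, F k)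
    (fun n => ((hmeas n).diff (.iInter hmeas)).nullMeasurableSet) hε2 ⟨0, measure_ne_top _ _⟩
    (eq_empty_of_forall_notMem fun x hx =>
      (mem_iInter.1 hx 0).2 (mem_iInter.2 fun n => (mem_iInter.1 hx n).1))
  refine ⟨⋂ n ≤ m, U n, (finite_Iic m).isOpen_biInter fun n _ => hUo n,
    fun x hx => mem_iInter₂.2 fun n _ => hFU n ⟨mem_iInter.1 hx.1 n, hx.2⟩, ?_⟩
  have hsub : (⋂ n ≤ m, U n) \ ⋂ k, F k ⊆
      (⋂ n ≤ m, F n \ ⋂ k, F k) ∪ ⋃ n, U n \ F n := by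
    rintro x ⟨hxU, hxF⟩
    by_contra hx
    rw [mem_union, not_or, mem_iUnion, not_exists] at hx
    exact hx.1 (mem_iInter₂.2 fun n hn =>
      ⟨by_contra fun h => hx.2 n ⟨mem_iInter₂.1 hxU n hn, h⟩, hxF⟩)
  calc ν ((⋂ n ≤ m, U n) \ ⋂ k, F k)
      ≤ ν (⋂ n ≤ m, F n \ ⋂ k, F k) + ν (⋃ n, U n \ F n) :=
        (measure_mono hsub).trans (measure_union_le _ _)
    _ ≤ ν (⋂ n ≤ m, F n \ ⋂ k, F k) + ∑' n, (e n : ℝ≥0∞) := by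
        gcongr
        exact (measure_iUnion_le _).trans (ENNReal.tsum_le_tsum fun n => (hUF n).le)
    _ < ε / 2 + ε / 2 := ENNReal.add_lt_add hm hsum
    _ = ε := ENNReal.add_halves ε

end IsOuterRegularWithin

lemma le_div_one_sub_mul_of_lt {m d c : ℝ≥0∞} (hc : c < 1) (h : m < c * (m + d)) :
    m ≤ c / (1 - c) * d := by
  rw [← ENNReal.mul_div_right_comm, ENNReal.le_div_iff_mul_le (.inl (tsub_pos_of_lt hc).ne')
    (.inl (ENNReal.sub_ne_top ENNReal.one_ne_top)), ENNReal.mul_sub fun _ _ => h.ne_top, mul_one,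
    mul_comm m c, tsub_le_iff_left, ← mul_add]
  exact h.le

namespace IsBorelQuasiMetric

variable {A : Type*} [TopologicalSpace A] [MeasurableSpace A] {q : A → A → ℝ} {K : ℝ}
  {ν : Measure A}

lemma eventually_qball_subset (hq : IsBorelQuasiMetric q K) {x : A} {U : Set A} (hU : U ∈ 𝓝 x) :
    ∀ᶠ r in 𝓝[>] (0 : ℝ), qball q x r ⊆ U := by
  obtain ⟨s, hs, hsU⟩ := (hq.nhds_hasBasis x).mem_iff.1 hU
  filter_upwards [Ioo_mem_nhdsGT hs] with r hr
  exact (qball_mono q x hr.2.le).trans hsU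

lemma exists_countable_pairwiseDisjoint_cover [SFinite ν] (hq : IsBorelQuasiMetric q K)
    {E : Set A} {ρ : A → ℝ} {R : ℝ} (hρ : ∀ x ∈ E, ρ x ∈ Ioc 0 R)
    (hpos : ∀ x ∈ E, 0 < ν (qball q x (ρ x))) :
    ∃ u ⊆ E, u.Countable ∧ u.PairwiseDisjoint (fun x => qball q x (ρ x)) ∧
      E ⊆ ⋃ b ∈ u, qball q b (2 * K * ρ b) := by
  obtain ⟨u, huE, hdisj, hcov⟩ := hq.exists_pairwiseDisjoint_cover hρ
  exact ⟨u, huE, countable_of_pairwiseDisjoint_of_measure_pos hdisj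
    (fun x _ => hq.measurableSet_qball x _) (fun x hx => hpos x (huE hx)), hdisj, hcov⟩

lemma exists_countable_cover_of_subset_support [SFinite ν] (hq : IsBorelQuasiMetric q K)
    {E : Set A} (hE : E ⊆ ν.support) {r : ℝ} (hr : 0 < r) :
    ∃ u ⊆ E, u.Countable ∧ E ⊆ ⋃ b ∈ u, qball q b r := by
  have hK : 0 < 2 * K := by linarith [hq.one_le]
  obtain ⟨u, huE, hu, -, hcov⟩ := hq.exists_countable_pairwiseDisjoint_cover (ν := ν) (E := E)
    (ρ := fun _ => r / (2 * K)) (fun _ _ => ⟨div_pos hr hK, le_rfl⟩)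
    (fun x hx => (hq.nhds_hasBasis x).mem_measureSupport.1 (hE hx) _ (div_pos hr hK))
  exact ⟨u, huE, hu, by simpa only [mul_div_cancel₀ r hK.ne'] using hcov⟩

lemma exists_isOpen_seq_iInter_subset [SFinite ν] (hq : IsBorelQuasiMetric q K) {F : Set A}
    (hF : IsClosed F) :
    ∃ V : ℕ → Set A, (∀ n, IsOpen (V n)) ∧ (∀ n, MeasurableSet (V n)) ∧
      (∀ n, F ∩ ν.support ⊆ V n) ∧ ⋂ n, V n ⊆ F := by
  choose u huF hu hcov using fun n : ℕ => hq.exists_countable_cover_of_subset_support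
    (ν := ν) (E := F ∩ ν.support) inter_subset_right (Nat.one_div_pos_of_nat (α := ℝ) (n := n))
  refine ⟨fun n => ⋃ b ∈ u n, qball q b (1 / (n + 1)),
    fun n => isOpen_biUnion fun b _ => hq.isOpen_qball b _,
    fun n => .biUnion (hu n) fun b _ => hq.measurableSet_qball b _, hcov, fun x hx => ?_⟩
  refine hF.closure_subset ((mem_closure_iff_nhds_basis (hq.nhds_hasBasis x)).2 fun ε hε => ?_)
  obtain ⟨n, hn⟩ := exists_nat_one_div_lt hε
  obtain ⟨b, hb, hbx⟩ := mem_iUnion₂.1 (mem_iInter.1 hx n)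
  exact ⟨b, (huF n hb).1, (hq.symm x b).trans_lt (lt_trans hbx hn)⟩

lemma isOuterRegularWithin_of_isClosed [IsFiniteMeasure ν] (hq : IsBorelQuasiMetric q K)
    {F : Set A} (hF : IsClosed F) : IsOuterRegularWithin ν ν.support F :=
  let ⟨_, hVo, hVm, hFV, hVF⟩ := hq.exists_isOpen_seq_iInter_subset (ν := ν) hF
  (IsOuterRegularWithin.iInter (fun n => .of_isOpen (hVo n)) hVm).of_subset
    (subset_iInter hFV) hVF

lemma isOuterRegularWithin_of_measurableSet [IsFiniteMeasure ν] (hq : IsBorelQuasiMetric q K)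
    {F : Set A} (hF : MeasurableSet F) : IsOuterRegularWithin ν ν.support F := by
  obtain ⟨G, hG, hGo⟩ := hq.exists_eq_generateFrom
  rw [hG] at hF
  suffices IsOuterRegularWithin ν ν.support F ∧ IsOuterRegularWithin ν ν.support Fᶜ from this.1
  induction F, hF using MeasurableSpace.generateFrom_induction with
  | hC s hs _ =>
    exact ⟨.of_isOpen (hGo s hs), hq.isOuterRegularWithin_of_isClosed (hGo s hs).isClosed_compl⟩
  | empty =>
    rw [compl_empty]
    exact ⟨.of_isOpen isOpen_empty, .of_isOpen isOpen_univ⟩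
  | compl s _ ih => exact ⟨ih.2, (compl_compl s).symm ▸ ih.1⟩
  | iUnion s hs ih =>
    rw [compl_iUnion]
    exact ⟨.iUnion fun n => (ih n).1, .iInter (fun n => (ih n).2) fun n => hG ▸ (hs n).compl⟩

lemma mem_support_of_frequently_measure_pos (hq : IsBorelQuasiMetric q K) {x : A}
    (hx : ∃ᶠ r in 𝓝[>] (0 : ℝ), 0 < ν (qball q x r)) : x ∈ ν.support := by
  refine (Measure.mem_support_iff_forall x).2 fun U hU => ?_
  obtain ⟨r, hr, hrU⟩ := (hx.and_eventually (hq.eventually_qball_subset hU)).exists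
  exact hr.trans_le (measure_mono hrU)

lemma measure_le_of_frequently_density_lt [SFinite ν] (hq : IsBorelQuasiMetric q K) {c : ℝ≥0∞}
    (hc : c < 1) {E F U : Set A} (hF : MeasurableSet F) (hU : IsOpen U) (hEF : E ⊆ F)
    (hEU : E ⊆ U)
    (hE : ∀ x ∈ E, ∃ᶠ r in 𝓝[>] (0 : ℝ), ν (F ∩ qball q x (2 * K * r)) < c * ν (qball q x r)) :
    ν E ≤ c / (1 - c) * ν (U \ F) := by
  have hbad : ∀ x ∈ E, ∃ r ∈ Ioc (0 : ℝ) 1, qball q x r ⊆ U ∧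
      ν (F ∩ qball q x (2 * K * r)) < c * ν (qball q x r) := fun x hx =>
    let ⟨r, ⟨hlt, hrU⟩, hr⟩ := (((hE x hx).and_eventually
      (hq.eventually_qball_subset (hU.mem_nhds (hEU hx)))).and_eventually
        (eventually_mem_set.2 (Ioc_mem_nhdsGT one_pos))).exists
    ⟨r, hr, hrU, hlt⟩
  choose! ρ hρ hρU hlt using hbad
  obtain ⟨u, huE, hu, hdisj, hcov⟩ := hq.exists_countable_pairwiseDisjoint_cover (ν := ν) hρ
    fun x hx => CanonicallyOrderedAdd.mul_pos.1 (pos_of_gt (hlt x hx)) |>.2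
  have hball : ∀ b ∈ u, ν (F ∩ qball q b (2 * K * ρ b)) ≤
      c / (1 - c) * ν (qball q b (ρ b) \ F) := fun b hb => by
    refine le_div_one_sub_mul_of_lt hc ((hlt b (huE hb)).trans_le ?_)
    gcongr
    rw [← measure_inter_add_sdiff (qball q b (ρ b)) hF, inter_comm]
    gcongr
    exact hq.qball_subset_qball_mul b (hρ b (huE hb)).1.le
  have : Countable u := hu.to_subtype
  calc ν E ≤ ν (⋃ b : u, F ∩ qball q b (2 * K * ρ b)) := by
        rw [← inter_iUnion, ← biUnion_eq_iUnion u fun b _ => qball q b (2 * K * ρ b)]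
        exact measure_mono (subset_inter hEF hcov)
    _ ≤ ∑' b : u, ν (F ∩ qball q b (2 * K * ρ b)) := measure_iUnion_le _
    _ ≤ ∑' b : u, c / (1 - c) * ν (qball q b (ρ b) \ F) :=
        ENNReal.tsum_le_tsum fun b => hball b b.2
    _ = c / (1 - c) * ν (⋃ b : u, qball q b (ρ b) \ F) := by
        rw [ENNReal.tsum_mul_left, measure_iUnion
          (fun a b hab => (hdisj.subtype _ _ hab).mono sdiff_subset sdiff_subset)
          fun b => (hq.measurableSet_qball _ _).diff hF]
    _ ≤ c / (1 - c) * ν (U \ F) := by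
        gcongr
        exact iUnion_subset fun b => sdiff_subset_sdiff_left (hρU b (huE b.2))

theorem ae_eventually_mul_measure_qball_le [IsFiniteMeasure ν] (hq : IsBorelQuasiMetric q K)
    {c : ℝ≥0∞} (hc : c < 1) {F : Set A} (hF : MeasurableSet F) :
    ∀ᵐ x ∂ν, x ∈ F → ∀ᶠ r in 𝓝[>] (0 : ℝ),
      c * ν (qball q x r) ≤ ν (F ∩ qball q x (2 * K * r)) := by
  set E := {x ∈ F | ∃ᶠ r in 𝓝[>] (0 : ℝ), ν (F ∩ qball q x (2 * K * r)) < c * ν (qball q x r)}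
  suffices hE0 : ν E = 0 by
    filter_upwards [measure_eq_zero_iff_ae_notMem.1 hE0] with x hx hxF
    by_contra hfreq
    exact hx ⟨hxF, by simpa only [not_eventually, not_le] using hfreq⟩
  have hES : E ⊆ F ∩ ν.support := fun x hx => ⟨hx.1, hq.mem_support_of_frequently_measure_pos
    (hx.2.mono fun r hr => (CanonicallyOrderedAdd.mul_pos.1 (pos_of_gt hr)).2)⟩
  have hCtop : c / (1 - c) ≠ ∞ := ENNReal.div_ne_top hc.ne_top (tsub_pos_of_lt hc).ne'
  by_contra hE0
  obtain ⟨ε, hε, hεE⟩ := ENNReal.exists_nnreal_pos_mul_lt hCtop hE0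
  obtain ⟨U, hU, hFU, hUF⟩ := hq.isOuterRegularWithin_of_measurableSet (ν := ν) hF ε
    (by exact_mod_cast hε)
  refine hεE.not_ge ?_
  calc ν E ≤ c / (1 - c) * ν (U \ F) := hq.measure_le_of_frequently_density_lt hc hF hU
        (hES.trans inter_subset_left) (hES.trans hFU) fun x hx => hx.2
    _ ≤ ε * (c / (1 - c)) := by rw [mul_comm]; gcongr

end IsBorelQuasiMetric

lemma qball_max {A B : Type*} (q : A → A → ℝ) (q' : B → B → ℝ) (x : A × B) (r : ℝ) :
    qball (fun x y => max (q x.1 y.1) (q' x.2 y.2)) x r = qball q x.1 r ×ˢ qball q' x.2 r :=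
  Set.ext fun y => max_lt_iff (a := r) (b := q x.1 y.1) (c := q' x.2 y.2)

lemma IsQuasiMetric.prod {A B : Type*} {q : A → A → ℝ} {q' : B → B → ℝ} {K K' : ℝ}
    (hq : IsQuasiMetric q K) (hq' : IsQuasiMetric q' K') :
    IsQuasiMetric (fun x y : A × B => max (q x.1 y.1) (q' x.2 y.2)) (max K K') where
  one_le := hq.one_le.trans (le_max_left _ _)
  self_eq_zero x := by rw [hq.self_eq_zero, hq'.self_eq_zero, max_self]
  symm x y := by rw [hq.symm, hq'.symm]
  le_mul_max x y z := by
    have hK : 0 ≤ max K K' := zero_le_one.trans (hq.one_le.trans (le_max_left _ _))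
    refine max_le ((hq.le_mul_max x.1 y.1 z.1).trans ?_) ((hq'.le_mul_max x.2 y.2 z.2).trans ?_)
    · exact mul_le_mul (le_max_left _ _) (max_le_max (le_max_left _ _) (le_max_left _ _))
        (le_max_of_le_left (hq.nonneg _ _)) hK
    · exact mul_le_mul (le_max_right _ _) (max_le_max (le_max_right _ _) (le_max_right _ _))
        (le_max_of_le_left (hq'.nonneg _ _)) hK

lemma IsBorelQuasiMetric.prod {A B : Type*} [TopologicalSpace A] [MeasurableSpace A]
    [TopologicalSpace B] [MeasurableSpace B] {q : A → A → ℝ} {q' : B → B → ℝ} {K K' : ℝ}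
    (hq : IsBorelQuasiMetric q K) (hq' : IsBorelQuasiMetric q' K') :
    IsBorelQuasiMetric (fun x y : A × B => max (q x.1 y.1) (q' x.2 y.2)) (max K K') where
  toIsQuasiMetric := hq.toIsQuasiMetric.prod hq'.toIsQuasiMetric
  nhds_hasBasis x := by
    rw [← Prod.mk.eta (p := x), nhds_prod_eq, funext (qball_max q q' (x.1, x.2))]
    exact (hq.nhds_hasBasis x.1).prod_same_index_mono (hq'.nhds_hasBasis x.2)
      ((qball_mono q x.1).monotoneOn _) ((qball_mono q' x.2).monotoneOn _)
  isOpen_qball x r := by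
    rw [qball_max]
    exact (hq.isOpen_qball x.1 r).prod (hq'.isOpen_qball x.2 r)
  measurableSet_qball x r := by
    rw [qball_max]
    exact (hq.measurableSet_qball x.1 r).prod (hq'.measurableSet_qball x.2 r)
  exists_eq_generateFrom := by
    obtain ⟨G, rfl, hG⟩ := hq.exists_eq_generateFrom
    obtain ⟨G', rfl, hG'⟩ := hq'.exists_eq_generateFrom
    refine ⟨preimage Prod.fst '' G ∪ preimage Prod.snd '' G', ?_, ?_⟩
    · rw [← MeasurableSpace.generateFrom_sup_generateFrom, ← MeasurableSpace.comap_generateFrom,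
        ← MeasurableSpace.comap_generateFrom]
      rfl
    · rintro _ (⟨s, hs, rfl⟩ | ⟨s, hs, rfl⟩)
      · exact (hG s hs).preimage continuous_fst
      · exact (hG' s hs).preimage continuous_snd

/-! ### The Gromov boundary as a quasi-metric space -/

section Boundary

variable {X : Type*} [MetricSpace X] {o : X} {δ : ℝ}

lemma gp_comm (o x y : X) : gp o x y = gp o y x := by
  simp only [gp, dist_comm x, dist_comm o y]
  ring

lemma gp_nonneg (o x y : X) : 0 ≤ gp o x y := by
  have := dist_triangle x o y
  simp only [gp]
  linarith

/-- The sequences `u` and `v` satisfy `(u n | v m)_o → ∞`. This is `bndRel` for sequences which are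
not yet known to be divergent; `IsDivergent o u` is `IsAsymptotic o u u`. -/
def IsAsymptotic (o : X) (u v : ℕ → X) : Prop :=
  Tendsto (fun p : ℕ × ℕ => gp o (u p.1) (v p.2)) atTop atTop

lemma IsAsymptotic.symm {u v : ℕ → X} (h : IsAsymptotic o u v) : IsAsymptotic o v u :=
  (h.comp (OrderIso.prodComm (α := ℕ) (β := ℕ)).tendsto_atTop).congr
    fun p => gp_comm o (u p.2) (v p.1)

lemma IsHyperbolicWith.eventually_sub_le_gp (hδ : IsHyperbolicWith X δ) {u v w : ℕ → X} {t : ℝ}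
    (huv : ∀ᶠ p : ℕ × ℕ in atTop, t ≤ gp o (u p.1) (v p.2))
    (hvw : ∀ᶠ p : ℕ × ℕ in atTop, t ≤ gp o (v p.1) (w p.2)) :
    ∀ᶠ p : ℕ × ℕ in atTop, t - δ ≤ gp o (u p.1) (w p.2) := by
  rw [eventually_atTop_prod_self] at *
  obtain ⟨N, hN⟩ := huv
  obtain ⟨M, hM⟩ := hvw
  refine ⟨max N M, fun n m hn hm => ?_⟩
  have huv := hN n (max N M) ((le_max_left N M).trans hn) (le_max_left N M)
  have hvw := hM (max N M) m (le_max_right N M) ((le_max_right N M).trans hm)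
  linarith [hδ (u n) (w m) (v (max N M)) o, le_min huv hvw]

lemma IsAsymptotic.trans (hδ : IsHyperbolicWith X δ) {u v w : ℕ → X} (huv : IsAsymptotic o u v)
    (hvw : IsAsymptotic o v w) : IsAsymptotic o u w :=
  Filter.tendsto_atTop.2 fun t => by
    simpa only [add_sub_cancel_right] using hδ.eventually_sub_le_gp
      (huv.eventually_ge_atTop (t + δ)) (hvw.eventually_ge_atTop (t + δ))

lemma IsAsymptotic.of_forall_eventually_le_gp (hδ : IsHyperbolicWith X δ) {x u : ℕ → X}
    (hu : IsDivergent o u) (hx : ∀ n : ℕ, ∀ᶠ k in atTop, (n : ℝ) ≤ gp o (x n) (u k)) :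
    IsAsymptotic o x u := by
  refine Filter.tendsto_atTop.2 fun t => eventually_atTop_prod_self.2 ?_
  obtain ⟨N, hN⟩ := exists_nat_ge (t + δ)
  obtain ⟨M, hM⟩ := eventually_atTop_prod_self.1 (hu.eventually_ge_atTop (t + δ))
  refine ⟨max N M, fun n m hn hm => ?_⟩
  obtain ⟨k, hxk, hk⟩ := ((hx n).and (eventually_ge_atTop M)).exists
  have hn' : (N : ℝ) ≤ n := by exact_mod_cast (le_max_left N M).trans hn
  have hum := hM k m hk ((le_max_right N M).trans hm)
  linarith [hδ (x n) (u m) (u k) o, le_min ((hN.trans hn').trans hxk) hum]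

lemma mkB_surjective (o : X) : Function.Surjective (mkB o) := Quot.exists_rep

lemma mkB_eq_mkB_iff (hδ : IsHyperbolicWith X δ) {u v : DivSeq X o} :
    mkB o u = mkB o v ↔ IsAsymptotic o u.1 v.1 :=
  have hequiv : Equivalence (bndRel o) :=
    ⟨fun u => u.2, IsAsymptotic.symm, IsAsymptotic.trans hδ⟩
  Quot.eq.trans hequiv.eqvGen_iff

lemma exists_mkB_eq_of_forall_eventually_le_gp (hδ : IsHyperbolicWith X δ) (u : DivSeq X o)
    {x : ℕ → X} (hx : ∀ n : ℕ, ∀ᶠ k in atTop, (n : ℝ) ≤ gp o (x n) (u.1 k)) :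
    ∃ hdiv : IsDivergent o x, mkB o ⟨x, hdiv⟩ = mkB o u :=
  have hxu := IsAsymptotic.of_forall_eventually_le_gp hδ u.2 hx
  ⟨hxu.trans hδ hxu.symm, (mkB_eq_mkB_iff hδ).2 hxu⟩

lemma gpB_comm (o : X) (ξ η : Boundary X o) : gpB o ξ η = gpB o η ξ := by
  have hliminf (u v : ℕ → X) : liminf (fun p : ℕ × ℕ => gp o (u p.1) (v p.2)) atTop =
      liminf (fun p : ℕ × ℕ => gp o (v p.1) (u p.2)) atTop := by
    conv_rhs => rw [← (OrderIso.prodComm (α := ℕ) (β := ℕ)).map_atTop, ← liminf_comp]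
    exact congrArg (liminf · atTop) (funext fun p => gp_comm o (u p.1) (v p.2))
  refine congrArg sInf (Set.ext fun t => ?_)
  constructor <;>
  · rintro ⟨u, v, hu, hv, rfl⟩
    exact ⟨v, u, hv, hu, hliminf u.1 v.1⟩

lemma qB_self (ξ : Boundary X o) : qB o ξ ξ = 0 := if_pos rfl

lemma qB_of_ne {ξ η : Boundary X o} (h : ξ ≠ η) : qB o ξ η = Real.exp (-gpB o ξ η) := if_neg h

lemma qB_comm (ξ η : Boundary X o) : qB o ξ η = qB o η ξ := by
  simp only [qB, gpB_comm o ξ η, eq_comm (a := ξ)]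

lemma qB_nonneg (ξ η : Boundary X o) : 0 ≤ qB o ξ η := by
  rw [qB]
  split_ifs
  exacts [le_rfl, (Real.exp_pos _).le]

/-- The `liminf` of Gromov products is junk when they are not frequently bounded above; this does
not happen for representatives of distinct boundary points. -/
lemma isCoboundedUnder_gp_of_mkB_ne (hδ : IsHyperbolicWith X δ) {u v : DivSeq X o}
    (h : mkB o u ≠ mkB o v) :
    IsCoboundedUnder (· ≥ ·) atTop fun p : ℕ × ℕ => gp o (u.1 p.1) (v.1 p.2) := by
  rw [Ne, mkB_eq_mkB_iff hδ, IsAsymptotic, Filter.tendsto_atTop, not_forall] at h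
  obtain ⟨t, ht⟩ := h
  exact .of_frequently_le ((not_eventually.1 ht).mono fun _ hp => (not_le.1 hp).le)

lemma eventually_lt_gp_of_qB_lt (hδ : IsHyperbolicWith X δ) {u v : DivSeq X o} {t : ℝ}
    (h : qB o (mkB o u) (mkB o v) < Real.exp (-t)) :
    ∀ᶠ p : ℕ × ℕ in atTop, t < gp o (u.1 p.1) (v.1 p.2) := by
  by_cases huv : mkB o u = mkB o v
  · exact ((mkB_eq_mkB_iff hδ).1 huv).eventually_gt_atTop t
  rw [qB_of_ne huv, Real.exp_lt_exp, neg_lt_neg_iff] at h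
  have hle : gpB o (mkB o u) (mkB o v) ≤
      liminf (fun p : ℕ × ℕ => gp o (u.1 p.1) (v.1 p.2)) atTop := by
    refine csInf_le ⟨0, ?_⟩ ⟨u, v, rfl, rfl, rfl⟩
    rintro _ ⟨u', v', hu', hv', rfl⟩
    exact le_liminf_of_le (isCoboundedUnder_gp_of_mkB_ne hδ (by rwa [hu', hv']))
      (.of_forall fun _ => gp_nonneg _ _ _)
  exact eventually_lt_of_lt_liminf (h.trans_le hle)
    (isBoundedUnder_of ⟨0, fun _ => gp_nonneg _ _ _⟩)

lemma qB_le_exp_neg (hδ : IsHyperbolicWith X δ) {ξ η : Boundary X o} {t : ℝ}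
    (h : ∀ u v : DivSeq X o, mkB o u = ξ → mkB o v = η →
      ∀ᶠ p : ℕ × ℕ in atTop, t ≤ gp o (u.1 p.1) (v.1 p.2)) : qB o ξ η ≤ Real.exp (-t) := by
  by_cases hne : ξ = η
  · rw [hne, qB_self]
    exact (Real.exp_pos _).le
  rw [qB_of_ne hne, Real.exp_le_exp, neg_le_neg_iff]
  refine le_csInf ?_ ?_
  · obtain ⟨u, hu⟩ := mkB_surjective o ξ
    obtain ⟨v, hv⟩ := mkB_surjective o η
    exact ⟨_, u, v, hu, hv, rfl⟩
  · rintro _ ⟨u, v, hu, hv, rfl⟩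
    exact le_liminf_of_le (isCoboundedUnder_gp_of_mkB_ne hδ (by rwa [hu, hv])) (h u v hu hv)

lemma qB_le_mul_max (hδ : IsHyperbolicWith X δ) (ξ ζ η : Boundary X o) :
    qB o ξ η ≤ Real.exp δ * max (qB o ξ ζ) (qB o ζ η) := by
  rw [← div_le_iff₀' (Real.exp_pos δ)]
  refine le_of_forall_gt_imp_ge_of_dense fun c hc => ?_
  have hc0 : 0 < c := (le_max_of_le_left (qB_nonneg ξ ζ)).trans_lt hc
  obtain ⟨t, rfl⟩ : ∃ t, Real.exp (-t) = c := ⟨-Real.log c, by rw [neg_neg, Real.exp_log hc0]⟩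
  obtain ⟨w, rfl⟩ := mkB_surjective o ζ
  rw [div_le_iff₀' (Real.exp_pos δ), ← Real.exp_add,
    show δ + -t = -(t - δ) by ring]
  refine qB_le_exp_neg hδ ?_
  rintro u v rfl rfl
  exact hδ.eventually_sub_le_gp
    ((eventually_lt_gp_of_qB_lt hδ ((le_max_left _ _).trans_lt hc)).mono fun _ => le_of_lt)
    ((eventually_lt_gp_of_qB_lt hδ ((le_max_right _ _).trans_lt hc)).mono fun _ => le_of_lt)

lemma isQuasiMetric_qB (h0 : 0 ≤ δ) (hδ : IsHyperbolicWith X δ) (o : X) :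
    IsQuasiMetric (qB o) (Real.exp δ) :=
  ⟨Real.one_le_exp h0, qB_self, qB_comm, qB_le_mul_max hδ⟩

lemma exists_gp_lt_of_exp_neg_lt_qB (hδ : IsHyperbolicWith X δ) {u w : DivSeq X o}
    {ζ : Boundary X o} {s t : ℝ} (hu : Real.exp (-t) < qB o (mkB o u) ζ)
    (hw : qB o (mkB o w) ζ < Real.exp (-s)) :
    ∃ x y : X, gp o x y < t ∧ (∀ᶠ k in atTop, s ≤ gp o x (u.1 k)) ∧
      ∀ᶠ k in atTop, s ≤ gp o y (w.1 k) := by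
  obtain ⟨u', v', hu', rfl, hfreq⟩ : ∃ u' v' : DivSeq X o, mkB o u' = mkB o u ∧ mkB o v' = ζ ∧
      ∃ᶠ p : ℕ × ℕ in atTop, gp o (u'.1 p.1) (v'.1 p.2) < t := by
    by_contra! hcon
    exact hu.not_ge (qB_le_exp_neg hδ fun u' v' hu' hv' =>
      (hcon u' v' hu' hv').mono fun _ hp => hp)
  have hnear_u : ∀ᶠ i in atTop, ∀ᶠ k in atTop, s ≤ gp o (u'.1 i) (u.1 k) :=
    eventually_atTop_curry (((mkB_eq_mkB_iff hδ).1 hu').eventually_ge_atTop s)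
  have hnear_w : ∀ᶠ j in atTop, ∀ᶠ k in atTop, s ≤ gp o (v'.1 j) (w.1 k) :=
    eventually_atTop_curry
      ((eventually_lt_gp_of_qB_lt hδ (qB_comm _ (mkB o w) ▸ hw)).mono fun _ => le_of_lt)
  rw [← prod_atTop_atTop_eq] at hfreq
  obtain ⟨⟨i, j⟩, hij, hi, hj⟩ := (hfreq.and_eventually (hnear_u.prod_mk hnear_w)).exists
  exact ⟨u'.1 i, v'.1 j, hij, hi, hj⟩

lemma exists_qball_qB_subset (hδ : IsHyperbolicWith X δ) {ξ η : Boundary X o} {r : ℝ}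
    (h : η ∈ qball (qB o) ξ r) : ∃ ε, 0 < ε ∧ qball (qB o) η ε ⊆ qball (qB o) ξ r := by
  obtain ⟨a, hηa, har⟩ := exists_between (show qB o ξ η < r from h)
  obtain ⟨t, rfl⟩ : ∃ t, Real.exp (-t) = a :=
    ⟨-Real.log a, by rw [neg_neg, Real.exp_log ((qB_nonneg ξ η).trans_lt hηa)]⟩
  obtain ⟨u, rfl⟩ := mkB_surjective o ξ
  obtain ⟨w, rfl⟩ := mkB_surjective o η
  by_contra! hcon
  have hnear (n : ℕ) : ∃ x y : X, gp o x y < t ∧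
      (∀ᶠ k in atTop, (n : ℝ) ≤ gp o x (u.1 k)) ∧ ∀ᶠ k in atTop, (n : ℝ) ≤ gp o y (w.1 k) :=
    let ⟨_, hζη, hζξ⟩ := not_subset.1 (hcon (Real.exp (-n)) (Real.exp_pos _))
    exists_gp_lt_of_exp_neg_lt_qB hδ (har.trans_le (not_lt.1 hζξ)) hζη
  -- The sequences `x` and `y` again represent `ξ` and `η`, but their Gromov products are too small.
  choose x y hxy hxu hyw using hnear
  obtain ⟨hx, hxξ⟩ := exists_mkB_eq_of_forall_eventually_le_gp hδ u hxu
  obtain ⟨hy, hyη⟩ := exists_mkB_eq_of_forall_eventually_le_gp hδ w hyw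
  rw [← hxξ, ← hyη] at hηa
  obtain ⟨N, hN⟩ := eventually_atTop_prod_self.1 (eventually_lt_gp_of_qB_lt hδ hηa)
  exact (hxy N).not_gt (hN N N le_rfl le_rfl)

/-- The quasi-metric topology on the Gromov boundary. It makes sense for every `X`, but balls are
known to be open only when `X` is hyperbolic. -/
instance : TopologicalSpace (Boundary X o) where
  IsOpen U := ∀ ξ ∈ U, ∃ r, 0 < r ∧ qball (qB o) ξ r ⊆ U
  isOpen_univ _ _ := ⟨1, one_pos, subset_univ _⟩
  isOpen_inter _ _ hU hV ξ hξ :=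
    let ⟨r, hr, hrU⟩ := hU ξ hξ.1
    let ⟨s, hs, hsV⟩ := hV ξ hξ.2
    ⟨min r s, lt_min hr hs, subset_inter ((qball_mono _ _ (min_le_left r s)).trans hrU)
      ((qball_mono _ _ (min_le_right r s)).trans hsV)⟩
  isOpen_sUnion _ h𝒰 ξ := fun ⟨U, hU, hξ⟩ =>
    let ⟨r, hr, hrU⟩ := h𝒰 U hU ξ hξ
    ⟨r, hr, hrU.trans (subset_sUnion_of_mem hU)⟩

lemma isOpen_qball_qB (hδ : IsHyperbolicWith X δ) (ξ : Boundary X o) (r : ℝ) :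
    IsOpen (qball (qB o) ξ r) :=
  fun _ hη => exists_qball_qB_subset hδ hη

lemma nhds_hasBasis_qball_qB (hδ : IsHyperbolicWith X δ) (ξ : Boundary X o) :
    (𝓝 ξ).HasBasis (0 < ·) (qball (qB o) ξ) := by
  refine ⟨fun U => ⟨fun hU => ?_, fun ⟨r, hr, hrU⟩ => ?_⟩⟩
  · obtain ⟨V, hVU, hV, hξV⟩ := mem_nhds_iff.1 hU
    obtain ⟨r, hr, hrV⟩ := hV ξ hξV
    exact ⟨r, hr, hrV.trans hVU⟩
  · exact mem_nhds_iff.2 ⟨_, hrU, isOpen_qball_qB hδ ξ r, (qB_self ξ).trans_lt hr⟩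

lemma isBorelQuasiMetric_qB (h0 : 0 ≤ δ) (hδ : IsHyperbolicWith X δ) (o : X) :
    IsBorelQuasiMetric (qB o) (Real.exp δ) where
  toIsQuasiMetric := isQuasiMetric_qB h0 hδ o
  nhds_hasBasis := nhds_hasBasis_qball_qB hδ
  isOpen_qball := isOpen_qball_qB hδ
  measurableSet_qball ξ r := MeasurableSpace.measurableSet_generateFrom ⟨ξ, r, rfl⟩
  exists_eq_generateFrom := ⟨_, rfl, by rintro _ ⟨ξ, r, rfl⟩; exact isOpen_qball_qB hδ ξ r⟩

end Boundary

theorem statement7_general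
    (X Xs : Type*) [MetricSpace X] [MetricSpace Xs]
    (hX : IsHyperbolic X) (hXs : IsHyperbolic Xs) (o : X) (os : Xs) :
    ∃ L : ℝ, 1 ≤ L ∧
      ∀ ν : Measure (Boundary X o × Boundary Xs os), IsFiniteMeasure ν →
      ∀ c : ℝ≥0∞, c < 1 →
      ∀ F : Set (Boundary X o × Boundary Xs os), MeasurableSet F →
      ∀ᵐ ξ ∂ν, ξ ∈ F → ∃ r0 : ℝ, 0 < r0 ∧ ∀ r : ℝ, 0 < r → r < r0 →
        c * ν (qball (qbb o os) ξ r) ≤ ν (F ∩ qball (qbb o os) ξ (L * r)) := by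
  obtain ⟨δ, h0, hδ⟩ := hX
  obtain ⟨δs, h0s, hδs⟩ := hXs
  have hq : IsBorelQuasiMetric (qbb o os) (max (Real.exp δ) (Real.exp δs)) :=
    (isBorelQuasiMetric_qB h0 hδ o).prod (isBorelQuasiMetric_qB h0s hδs os)
  refine ⟨2 * max (Real.exp δ) (Real.exp δs), by linarith [hq.one_le], fun ν _ c hc F hF => ?_⟩
  filter_upwards [hq.ae_eventually_mul_measure_qball_le hc hF] with ξ hξ hξF
  obtain ⟨r0, hr0, h⟩ := (nhdsGT_basis 0).eventually_iff.1 (hξ hξF)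
  exact ⟨r0, hr0, fun r hr hrr0 => h ⟨hr, hrr0⟩⟩

/-- Lemma 2.2, Bonk–Schramm density lemma: a weak Lebesgue density
property for Borel measures on a product of boundaries of hyperbolic spaces of bounded
growth. -/
theorem statement7
    (X Xs : Type*) [MetricSpace X] [MetricSpace Xs]
    (hX : IsHyperbolic X) (hXs : IsHyperbolic Xs)
    (hXb : HasBoundedGrowthAtSomeScale X) (hXsb : HasBoundedGrowthAtSomeScale Xs)
    (o : X) (os : Xs) :
    ∃ L : ℝ, 1 ≤ L ∧
      ∀ ν : Measure (Boundary X o × Boundary Xs os), IsProbabilityMeasure ν →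
      ∀ F : Set (Boundary X o × Boundary Xs os), MeasurableSet F → 0 < ν F →
      ∀ᵐ ξ ∂ν, ξ ∈ F → ∃ r0 : ℝ, 0 < r0 ∧ ∀ r : ℝ, 0 < r → r < r0 →
        (9 / 10 : ℝ≥0∞) * ν (qball (qbb o os) ξ r) ≤
          ν (F ∩ qball (qbb o os) ξ (L * r)) := by
  obtain ⟨L, hL, h⟩ := statement7_general X Xs hX hXs o os
  exact ⟨L, hL, fun ν _ F hF _ => h ν inferInstance (9 / 10)
    (ENNReal.div_lt_of_lt_mul (by norm_num)) F hF⟩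

end HMDim
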